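/- arXiv:2110.09155 — 2 statements merged into one kernel-verified Lean document; each statement's English description precedes it below -/
import Mathlib

section
/- Let U be an m×r complex matrix with Uᴴ·U = I_r, let Σ be an invertible r×r complex matrix, let V be an N×r complex matrix, and let Y be an m×N complex matrix. Define A := Y·V·Σ⁻¹·Uᴴ and Ã := Uᴴ·Y·V·Σ⁻¹. Suppose w ∈ ℂʳ is nonzero, λ ∈ ℂ is nonzero, and Ã·w = λ·w. Then the vector φ := λ⁻¹ · (Y·V·Σ⁻¹)·w is nonzero and satisfies A·φ = λ·φ. In particular, every nonzero eigenvalue of the low-rank operator Ã is an eigenvalue of the full operator A, with eigenvector obtained from that of Ã. -/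
open scoped Matrix

/-- Every eigenpair `(λ, w)` of the low-rank operator `Ã = Uᴴ·Y·V·Σ⁻¹` with `λ ≠ 0`
lifts to the eigenpair `(λ, φ)` of the full DMD operator `A = Y·V·Σ⁻¹·Uᴴ`, where
`φ = λ⁻¹·(Y·V·Σ⁻¹)·w`. -/
theorem dmd_eigen_lift {m r N : ℕ}
    (U : Matrix (Fin m) (Fin r) ℂ) (hU : Uᴴ * U = 1)
    (S : Matrix (Fin r) (Fin r) ℂ) (hS : IsUnit S.det)
    (V : Matrix (Fin N) (Fin r) ℂ) (Y : Matrix (Fin m) (Fin N) ℂ)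
    (w : Fin r → ℂ) (hw : w ≠ 0) (lam : ℂ) (hlam : lam ≠ 0)
    (heig : (Uᴴ * Y * V * S⁻¹).mulVec w = lam • w) :
    lam⁻¹ • (Y * V * S⁻¹).mulVec w ≠ 0 ∧
    (Y * V * S⁻¹ * Uᴴ).mulVec (lam⁻¹ • (Y * V * S⁻¹).mulVec w)
      = lam • (lam⁻¹ • (Y * V * S⁻¹).mulVec w) := by
  -- With `B = Y * V * S⁻¹` the two operators are `Ã = Uᴴ * B` and `A = B * Uᴴ`, so `B` intertwines
  -- them: `A * B = B * Ã`.
  have key : Uᴴ.mulVec ((Y * V * S⁻¹).mulVec w) = lam • w := by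
    rw [Matrix.mulVec_mulVec, ← heig]
    simp only [Matrix.mul_assoc]
  refine ⟨smul_ne_zero (inv_ne_zero hlam) fun h => ?_, ?_⟩
  · rw [h, Matrix.mulVec_zero] at key
    exact smul_ne_zero hlam hw key.symm
  · rw [← Matrix.mulVec_mulVec, Matrix.mulVec_smul, key, Matrix.mulVec_smul, Matrix.mulVec_smul,
      smul_comm]
end

section
/- Let U be an m×r complex matrix with Uᴴ·U = I_r, let Σ be an invertible r×r complex matrix, let V be an N×r complex matrix, and let Y be an m×N complex matrix. Define A := Y·V·Σ⁻¹·Uᴴ and Ã := Uᴴ·Y·V·Σ⁻¹. Suppose φ ∈ ℂᵐ is nonzero, λ ∈ ℂ is nonzero, and A·φ = λ·φ. Then the vector w := Uᴴ·φ is nonzero and satisfies Ã·w = λ·w. In particular, every nonzero eigenvalue of the full operator A is an eigenvalue of the low-rank operator Ã. -/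
open scoped Matrix

/-- Every eigenpair `(λ, φ)` of the full DMD operator `A = Y·V·Σ⁻¹·Uᴴ` with `λ ≠ 0`
projects to the eigenpair `(λ, w)` of the low-rank operator `Ã = Uᴴ·Y·V·Σ⁻¹`, where
`w = Uᴴ·φ`. -/
theorem dmd_eigen_project {m r N : ℕ}
    (U : Matrix (Fin m) (Fin r) ℂ) (hU : Uᴴ * U = 1)
    (S : Matrix (Fin r) (Fin r) ℂ) (hS : IsUnit S.det)
    (V : Matrix (Fin N) (Fin r) ℂ) (Y : Matrix (Fin m) (Fin N) ℂ)
    (phi : Fin m → ℂ) (hphi : phi ≠ 0) (lam : ℂ) (hlam : lam ≠ 0)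
    (heig : (Y * V * S⁻¹ * Uᴴ).mulVec phi = lam • phi) :
    Uᴴ.mulVec phi ≠ 0 ∧
    (Uᴴ * Y * V * S⁻¹).mulVec (Uᴴ.mulVec phi) = lam • Uᴴ.mulVec phi := by
  constructor
  · -- If `Uᴴ φ = 0`, then `λ φ = (Y V Σ⁻¹) (Uᴴ φ) = 0`.
    intro h
    rw [← Matrix.mulVec_mulVec, h, Matrix.mulVec_zero] at heig
    exact smul_ne_zero hlam hphi heig.symm
  · -- Apply `Uᴴ` to the eigenvalue equation: `Ã Uᴴ = Uᴴ A` by associativity.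
    rw [← Matrix.mulVec_smul, ← heig]
    simp only [Matrix.mulVec_mulVec, Matrix.mul_assoc]
end
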